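/- Let n, p ∈ ℕ with n ≥ 2 and p ≥ 2, and let A₁, A₂, …, A_p ∈ GL_n(ℂ) be such that for all i < j in {1,…,p}, the matrix A_i A_j⁻¹ is a pseudo-reflection. Then, after a simultaneous change of basis, the matrices A₁,…,A_p have n−1 common rows or n−1 common columns: there exists P ∈ GL_n(ℂ) and an index k ∈ {1,…,n} such that either (for all i, i' ∈ {1,…,p} and every l ≠ k, the l-th column of P A_i P⁻¹ equals the l-th column of P A_{i'} P⁻¹), or (for all i, i' ∈ {1,…,p} and every l ≠ k, the l-th row of P A_i P⁻¹ equals the l-th row of P A_{i'} P⁻¹). -/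

import Mathlib

/-- `h` is a pseudo-reflection: `rank (h − 1) = 1`. -/
def IsPseudoReflection {n : ℕ} (h : Matrix (Fin n) (Fin n) ℂ) : Prop :=
  (h - 1).rank = 1

/-!
Multiplying `Aᵢ Aⱼ⁻¹ - 1` by `Aⱼ` shows that every difference `Aᵢ - Aⱼ` is a rank-one matrix
`x yᵀ`. A difference `x yᵀ - u vᵀ` has rank two as soon as `x, u` and `y, v` are both linearly
independent. Fix one nonzero difference `Aᵢ₀ - Aⱼ₀ = u vᵀ`: each `Aᵢ - Aⱼ₀` is then of the form
`u wᵀ` or `w vᵀ`, and one of the two forms must serve for all `i`, since exceptions to both would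
differ by a matrix of rank two. A basis in which the common factor is a multiple of a basis vector
finally confines all differences to a single row or a single column.
-/

open Matrix

section RankOne

variable {m n K : Type*} [Field K]

lemma linearIndependent_pair_of_forall_vecMulVec_ne_left {x u : m → K} {y : n → K} (hu : u ≠ 0)
    (h : ∀ w, vecMulVec x y ≠ vecMulVec u w) : LinearIndependent K ![x, u] := by
  rw [LinearIndependent.pair_symm_iff, LinearIndependent.pair_iff' hu]
  rintro a rfl
  exact h (a • y) (by rw [smul_vecMulVec, vecMulVec_smul])

lemma linearIndependent_pair_of_forall_vecMulVec_ne_right {x : m → K} {y v : n → K} (hv : v ≠ 0)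
    (h : ∀ w, vecMulVec x y ≠ vecMulVec w v) : LinearIndependent K ![y, v] := by
  rw [LinearIndependent.pair_symm_iff, LinearIndependent.pair_iff' hv]
  rintro a rfl
  exact h (a • x) (by rw [smul_vecMulVec, vecMulVec_smul])

variable [Fintype n]

lemma rank_mul_eq_card_of_linearIndependent {l : Type*} [Fintype m] {U : Matrix l m K}
    {V : Matrix m n K} (hU : LinearIndependent K U.col) (hV : LinearIndependent K V.row) :
    (U * V).rank = Fintype.card m := by
  have hinj : Function.Injective U.mulVecLin := mulVec_injective_iff.mpr hU
  rw [← hV.rank_matrix, rank, rank, mulVecLin_mul, LinearMap.range_comp]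
  exact (Submodule.equivMapOfInjective _ hinj _).finrank_eq.symm

lemma rank_vecMulVec_sub_vecMulVec {x u : m → K} {y v : n → K}
    (hxu : LinearIndependent K ![x, u]) (hyv : LinearIndependent K ![y, v]) :
    (vecMulVec x y - vecMulVec u v).rank = 2 := by
  have hfactor : vecMulVec x y - vecMulVec u v = (of ![x, u])ᵀ * of ![y, -v] := by
    ext i j
    simp [mul_apply, vecMulVec_apply, sub_eq_add_neg]
  have hrows : LinearIndependent K (of ![y, -v]).row :=
    LinearIndependent.pair_neg_right_iff.mpr hyv
  have hcols : LinearIndependent K (of ![x, u])ᵀ.col := hxu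
  rw [hfactor, rank_mul_eq_card_of_linearIndependent hcols hrows, Fintype.card_fin]

lemma exists_eq_vecMulVec_of_rank_le_one {B : Matrix m n K} (hB : B.rank ≤ 1) :
    ∃ x y, B = vecMulVec x y := by
  classical
  obtain ⟨⟨x, _⟩, hx⟩ := finrank_le_one_iff.mp hB
  have hcol (j : n) : ∃ c : K, c • x = B.col j := by
    obtain ⟨c, hc⟩ := hx ⟨B.col j, Pi.single j 1, mulVec_single_one B j⟩
    exact ⟨c, congrArg Subtype.val hc⟩
  choose y hy using hcol
  refine ⟨x, y, ?_⟩
  ext i j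
  rw [vecMulVec_apply, mul_comm]
  exact (congrFun (hy j) i).symm

lemma eq_vecMulVec_left_or_right_of_rank_le_one {B : Matrix m n K} {u : m → K} {v : n → K}
    (hu : u ≠ 0) (hv : v ≠ 0) (hB : B.rank ≤ 1) (hsub : (B - vecMulVec u v).rank ≤ 1) :
    (∃ w, B = vecMulVec u w) ∨ ∃ w, B = vecMulVec w v := by
  obtain ⟨x, y, rfl⟩ := exists_eq_vecMulVec_of_rank_le_one hB
  by_contra! ⟨hleft, hright⟩
  have hrank := rank_vecMulVec_sub_vecMulVec
    (linearIndependent_pair_of_forall_vecMulVec_ne_left hu hleft)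
    (linearIndependent_pair_of_forall_vecMulVec_ne_right hv hright)
  rw [hrank] at hsub
  exact absurd hsub (by decide)

lemma eq_vecMulVec_left_or_right_of_rank_vecMulVec_sub_le_one {u w : m → K} {v z : n → K}
    (hu : u ≠ 0) (hv : v ≠ 0) (hsub : (vecMulVec w v - vecMulVec u z).rank ≤ 1) :
    (∃ z', vecMulVec w v = vecMulVec u z') ∨ ∃ w', vecMulVec u z = vecMulVec w' v := by
  by_contra! ⟨hleft, hright⟩
  have hrank := rank_vecMulVec_sub_vecMulVec
    (linearIndependent_pair_of_forall_vecMulVec_ne_left hu hleft)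
    (LinearIndependent.pair_symm_iff.mp
      (linearIndependent_pair_of_forall_vecMulVec_ne_right hv hright))
  rw [hrank] at hsub
  exact absurd hsub (by decide)

theorem exists_common_vecMulVec_factor_of_rank_sub_le_one {ι : Type*} {A : ι → Matrix m n K}
    (hA : ∀ i j, (A i - A j).rank ≤ 1) :
    (∃ u, ∀ i j, ∃ w, A i - A j = vecMulVec u w) ∨
      ∃ v, ∀ i j, ∃ w, A i - A j = vecMulVec w v := by
  by_cases hconst : ∀ i j, A i = A j
  · exact .inl ⟨0, fun i j ↦ ⟨0, by rw [hconst i j, sub_self, zero_vecMulVec]⟩⟩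
  push Not at hconst
  obtain ⟨i₀, j₀, hne⟩ := hconst
  obtain ⟨u, v, huv⟩ := exists_eq_vecMulVec_of_rank_le_one (hA i₀ j₀)
  have huv₀ : vecMulVec u v ≠ 0 := huv ▸ sub_ne_zero.mpr hne
  have hu : u ≠ 0 := by
    rintro rfl
    exact huv₀ (zero_vecMulVec v)
  have hv : v ≠ 0 := by
    rintro rfl
    exact huv₀ (by ext; simp only [vecMulVec_apply, Pi.zero_apply, mul_zero, Matrix.zero_apply])
  have hform (i : ι) :
      (∃ w, A i - A j₀ = vecMulVec u w) ∨ ∃ w, A i - A j₀ = vecMulVec w v := by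
    refine eq_vecMulVec_left_or_right_of_rank_le_one hu hv (hA i j₀) ?_
    rw [← huv, sub_sub_sub_cancel_right]
    exact hA i i₀
  have huniform : (∀ i, ∃ w, A i - A j₀ = vecMulVec u w) ∨
      ∀ i, ∃ w, A i - A j₀ = vecMulVec w v := by
    by_contra! ⟨⟨i, hi⟩, ⟨j, hj⟩⟩
    obtain ⟨w, hw⟩ := (hform i).resolve_left (not_exists.mpr hi)
    obtain ⟨z, hz⟩ := (hform j).resolve_right (not_exists.mpr hj)
    have hsub : (vecMulVec w v - vecMulVec u z).rank ≤ 1 := by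
      rw [← hw, ← hz, sub_sub_sub_cancel_right]
      exact hA i j
    rcases eq_vecMulVec_left_or_right_of_rank_vecMulVec_sub_le_one hu hv hsub with
      ⟨z', h⟩ | ⟨w', h⟩
    · exact hi z' (hw.trans h)
    · exact hj w' (hz.trans h)
  refine huniform.imp (fun h ↦ ⟨u, fun i j ↦ ?_⟩) fun h ↦ ⟨v, fun i j ↦ ?_⟩
  · obtain ⟨w, hw⟩ := h i
    obtain ⟨z, hz⟩ := h j
    exact ⟨w - z, by rw [vecMulVec_sub, ← hw, ← hz, sub_sub_sub_cancel_right]⟩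
  · obtain ⟨w, hw⟩ := h i
    obtain ⟨z, hz⟩ := h j
    exact ⟨w - z, by rw [sub_vecMulVec, ← hw, ← hz, sub_sub_sub_cancel_right]⟩

end RankOne

section CommRing

variable {n R : Type*} [Fintype n] [DecidableEq n] [CommRing R]

lemma det_updateCol_one (k : n) (u : n → R) : ((1 : Matrix n n R).updateCol k u).det = u k := by
  rw [← cramer_apply, cramer_one, Module.End.one_apply]

lemma rank_mul_inv_sub_one (A : Matrix n n R) {B : Matrix n n R} (hB : IsUnit B.det) :
    (A * B⁻¹ - 1).rank = (A - B).rank := by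
  rw [← rank_mul_eq_left_of_isUnit_det B _ hB, sub_mul, Matrix.mul_assoc, nonsing_inv_mul B hB,
    Matrix.mul_one, Matrix.one_mul]

end CommRing

section CommonRows

/-- The family `A` has `n − 1` common rows; the exceptional index `k` is kept as a parameter. -/
def HasCommonRowsExcept {ι m n K : Type*} (k : m) (A : ι → Matrix m n K) : Prop :=
  ∀ i i' : ι, ∀ l : m, l ≠ k → ∀ j : n, A i l j = A i' l j

/-- The family `A` has `n − 1` common columns; the exceptional index `k` is kept as a parameter. -/
def HasCommonColsExcept {ι m n K : Type*} (k : n) (A : ι → Matrix m n K) : Prop :=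
  ∀ i i' : ι, ∀ l : n, l ≠ k → ∀ j : m, A i j l = A i' j l

variable {ι n K : Type*} [Fintype n] [DecidableEq n] [Field K]

lemma exists_isUnit_det_mulVec_eq_single [Nonempty n] (u : n → K) :
    ∃ P : Matrix n n K, IsUnit P.det ∧ ∃ k c, P *ᵥ u = Pi.single k c := by
  by_cases hu : u = 0
  · exact ⟨1, by simp, Classical.arbitrary n, 0, by simp [hu]⟩
  obtain ⟨k, hk⟩ := Function.ne_iff.mp hu
  let Q : Matrix n n K := (1 : Matrix n n K).updateCol k u
  have hQ : IsUnit Q.det := by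
    rw [det_updateCol_one]
    exact isUnit_iff_ne_zero.mpr hk
  have hQk : Q *ᵥ Pi.single k 1 = u := by
    rw [mulVec_single_one]
    exact funext fun i ↦ updateCol_self
  refine ⟨Q⁻¹, isUnit_nonsing_inv_det Q hQ, k, 1, ?_⟩
  rw [← hQk, mulVec_mulVec, nonsing_inv_mul Q hQ, one_mulVec]

lemma exists_conj_hasCommonRowsExcept [Nonempty n] {A : ι → Matrix n n K} {u : n → K}
    (hA : ∀ i j, ∃ w, A i - A j = vecMulVec u w) :
    ∃ P : Matrix n n K, IsUnit P.det ∧ ∃ k, HasCommonRowsExcept k fun i ↦ P * A i * P⁻¹ := by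
  obtain ⟨P, hP, k, c, hPu⟩ := exists_isUnit_det_mulVec_eq_single u
  refine ⟨P, hP, k, fun i i' l hl j ↦ ?_⟩
  obtain ⟨w, hw⟩ := hA i i'
  have hconj : P * A i * P⁻¹ - P * A i' * P⁻¹ = vecMulVec (Pi.single k c) (w ᵥ* P⁻¹) := by
    rw [← sub_mul, ← mul_sub, hw, mul_vecMulVec, vecMulVec_mul, hPu]
  rw [← sub_eq_zero, ← Matrix.sub_apply, hconj, vecMulVec_apply, Pi.single_eq_of_ne hl, zero_mul]

lemma exists_conj_hasCommonColsExcept [Nonempty n] {A : ι → Matrix n n K} {v : n → K}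
    (hA : ∀ i j, ∃ w, A i - A j = vecMulVec w v) :
    ∃ P : Matrix n n K, IsUnit P.det ∧ ∃ k, HasCommonColsExcept k fun i ↦ P * A i * P⁻¹ := by
  have hAt (i j : ι) : ∃ w, (A i)ᵀ - (A j)ᵀ = vecMulVec v w := by
    obtain ⟨w, hw⟩ := hA i j
    exact ⟨w, by rw [← transpose_sub, hw, transpose_vecMulVec]⟩
  obtain ⟨Q, hQ, k, hrows⟩ := exists_conj_hasCommonRowsExcept hAt
  have hQt : IsUnit Qᵀ.det := by rwa [det_transpose]
  have hconj (i : ι) : Qᵀ⁻¹ * A i * Qᵀ⁻¹⁻¹ = (Q * (A i)ᵀ * Q⁻¹)ᵀ := by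
    rw [nonsing_inv_nonsing_inv _ hQt, transpose_mul, transpose_mul, transpose_transpose,
      transpose_nonsing_inv, Matrix.mul_assoc]
  refine ⟨Qᵀ⁻¹, isUnit_nonsing_inv_det _ hQt, k, ?_⟩
  simp only [hconj]
  exact hrows

theorem levelt_stmt7_general [Nonempty n] {A : ι → Matrix n n K}
    (hA : ∀ i j, (A i - A j).rank ≤ 1) :
    ∃ P : Matrix n n K, IsUnit P.det ∧ ∃ k : n,
      HasCommonColsExcept k (fun i ↦ P * A i * P⁻¹) ∨
        HasCommonRowsExcept k (fun i ↦ P * A i * P⁻¹) := by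
  rcases exists_common_vecMulVec_factor_of_rank_sub_le_one hA with ⟨u, hu⟩ | ⟨v, hv⟩
  · obtain ⟨P, hP, k, hrows⟩ := exists_conj_hasCommonRowsExcept hu
    exact ⟨P, hP, k, .inr hrows⟩
  · obtain ⟨P, hP, k, hcols⟩ := exists_conj_hasCommonColsExcept hv
    exact ⟨P, hP, k, .inl hcols⟩

end CommonRows

lemma rank_sub_le_one_of_isPseudoReflection_mul_inv {n : ℕ} {ι : Type*} [LinearOrder ι]
    {A : ι → Matrix (Fin n) (Fin n) ℂ} (hA : ∀ i, IsUnit (A i).det)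
    (hpr : ∀ i j, i < j → IsPseudoReflection (A i * (A j)⁻¹)) (i j : ι) :
    (A i - A j).rank ≤ 1 := by
  have hlt {i j : ι} (hij : i < j) : (A i - A j).rank = 1 :=
    (rank_mul_inv_sub_one (A i) (hA j)).symm.trans (hpr i j hij)
  rcases lt_trichotomy i j with hij | rfl | hji
  · exact (hlt hij).le
  · rw [sub_self, rank_zero]
    exact zero_le_one
  · rw [← neg_sub, ← neg_one_smul ℂ, rank_smul_of_mem_nonZeroDivisors _ (by simp)]
    exact (hlt hji).le

/-- If `A₁,…,A_p ∈ GLₙ(ℂ)` (`n, p ≥ 2`) are such that `Aᵢ Aⱼ⁻¹` is a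
pseudo-reflection for all `i < j`, then after a simultaneous conjugation the matrices have
`n−1` common columns or `n−1` common rows. -/
theorem levelt_stmt7 (n p : ℕ) (hn : 2 ≤ n) (hp : 2 ≤ p)
    (A : Fin p → Matrix (Fin n) (Fin n) ℂ) (hA : ∀ i, IsUnit (A i).det)
    (hpr : ∀ i j : Fin p, i < j → IsPseudoReflection (A i * (A j)⁻¹)) :
    ∃ P : Matrix (Fin n) (Fin n) ℂ, IsUnit P.det ∧ ∃ k : Fin n,
      ((∀ i i' : Fin p, ∀ l : Fin n, l ≠ k → ∀ m : Fin n,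
          (P * A i * P⁻¹) m l = (P * A i' * P⁻¹) m l) ∨
       (∀ i i' : Fin p, ∀ l : Fin n, l ≠ k → ∀ m : Fin n,
          (P * A i * P⁻¹) l m = (P * A i' * P⁻¹) l m)) := by
  have : Nonempty (Fin n) := ⟨⟨0, by lia⟩⟩
  exact levelt_stmt7_general (rank_sub_le_one_of_isPseudoReflection_mul_inv hA hpr)
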